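/- arXiv:1003.3852 — 2 statements merged into one kernel-verified Lean document; each statement's English description precedes it below -/
import Mathlib

section
/- (n-fold tensorization) Let 𝒳 be a Polish space, c a lower semicontinuous cost function on 𝒳×𝒳, and α ∈ 𝒜. If μ ∈ P(𝒳) satisfies α(𝒯_c(ν,μ)) ≤ H(ν|μ) for all ν ∈ P(𝒳), then for every integer n ≥ 1 the product measure μⁿ on 𝒳ⁿ satisfies n·α(𝒯_{c^{⊕n}}(ν, μⁿ)/n) ≤ H(ν|μⁿ) for all ν ∈ P(𝒳ⁿ), where c^{⊕n}((x₁,…,xₙ),(y₁,…,yₙ)) = Σ_{i=1}^n c(xᵢ,yᵢ). -/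
open MeasureTheory ENNReal

/-- The optimal transport cost `𝒯_c(ν, μ)` associated with the cost function `c`:
the infimum of `∫ c dπ` over all couplings `π` of `ν` and `μ`. -/
noncomputable def optCost {X : Type*} [MeasurableSpace X] (c : X → X → ℝ)
    (ν μ : Measure X) : ℝ≥0∞ :=
  ⨅ (π : Measure (X × X)) (_ : π.map Prod.fst = ν ∧ π.map Prod.snd = μ),
    ∫⁻ p, ENNReal.ofReal (c p.1 p.2) ∂π

open Classical in
/-- The relative entropy `H(ν|μ)`: it equals `∫ h(dν/dμ) dμ` with
`h(t) = t log t - t + 1 ≥ 0` if `ν ≪ μ`, and `+∞` otherwise.  For probability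
measures `ν ≪ μ` this coincides with `∫ log (dν/dμ) dν`. -/
noncomputable def relEntropy {X : Type*} [MeasurableSpace X] (ν μ : Measure X) : ℝ≥0∞ :=
  if ν ≪ μ then
    ∫⁻ x, ENNReal.ofReal ((ν.rnDeriv μ x).toReal * Real.log (ν.rnDeriv μ x).toReal
      - (ν.rnDeriv μ x).toReal + 1) ∂μ
  else ∞

/-- The natural extension to `ℝ≥0∞` of a function `α : [0,∞) → [0,∞)`.
For an increasing `α` and `x < ∞` it equals `ENNReal.ofReal (α x.toReal)`,
and at `x = ∞` it is the limit of `α` at `+∞` (so `∞` when `α` is unbounded). -/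
noncomputable def extRealFun (α : ℝ → ℝ) (x : ℝ≥0∞) : ℝ≥0∞ :=
  ⨆ (t : ℝ) (_ : 0 ≤ t ∧ ENNReal.ofReal t ≤ x), ENNReal.ofReal (α t)

/-!
Where a convex `α` with `α 0 ≤ 0` is positive, it is the maximum of its affine minorants `m s - d`
with `m > 0`, so `α(𝒯_c(·, μ)) ≤ H(·|μ)` amounts to the linear inequalities
`m 𝒯_c(·, μ) ≤ H(·|μ) + d` over all these minorants.

Linear inequalities tensorize, the additive constants adding up: an optimal coupling of the first
marginals followed by optimal couplings of the conditional laws of the second coordinate is a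
coupling in the product, and by the chain rule the entropies of the first marginal and of the
conditional laws add up to the entropy on the product.

Conditional laws indexed by a continuum would require a measurable selection of optimal couplings.
Instead, the conditional law is averaged over the cells of a countable partition of the first space:
this does not increase the entropy, and only countably many couplings have to be chosen. When the
partitions are generated by more and more sets of a countable basis, the averaged measures converge
weakly to the original one, and the bound passes to the limit because couplings form a tight family
and the transport cost of a lower semicontinuous cost is lower semicontinuous.
-/

open ProbabilityTheory InformationTheory Filter Topology

section LowerSemicontinuous

variable {Ω : Type*} [MeasurableSpace Ω] [TopologicalSpace Ω]

lemma lintegral_ofReal_le_liminf_of_lowerSemicontinuous [OpensMeasurableSpace Ω]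
    {μ : Measure Ω} {μs : ℕ → Measure Ω}
    (hopen : ∀ G, IsOpen G → μ G ≤ liminf (fun k ↦ μs k G) atTop)
    {f : Ω → ℝ} (hf : LowerSemicontinuous f) (hf0 : 0 ≤ f) :
    ∫⁻ x, ENNReal.ofReal (f x) ∂μ ≤ liminf (fun k ↦ ∫⁻ x, ENNReal.ofReal (f x) ∂μs k) atTop := by
  simp_rw [lintegral_eq_lintegral_meas_lt _ (Eventually.of_forall hf0) hf.measurable.aemeasurable]
  calc ∫⁻ t in Set.Ioi (0 : ℝ), μ {a | t < f a}
      ≤ ∫⁻ t in Set.Ioi (0 : ℝ), liminf (fun k ↦ μs k {a | t < f a}) atTop :=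
        lintegral_mono fun t ↦ hopen _ (hf.isOpen_preimage t)
    _ ≤ liminf (fun k ↦ ∫⁻ t in Set.Ioi (0 : ℝ), μs k {a | t < f a}) atTop :=
        lintegral_liminf_le fun k ↦ Antitone.measurable fun _ _ hst ↦
          measure_mono fun _ ↦ hst.trans_lt

lemma lintegral_le_liminf_of_lowerSemicontinuous [OpensMeasurableSpace Ω]
    {μ : Measure Ω} {μs : ℕ → Measure Ω}
    (hopen : ∀ G, IsOpen G → μ G ≤ liminf (fun k ↦ μs k G) atTop)
    {f : Ω → ℝ≥0∞} (hf : LowerSemicontinuous f) :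
    ∫⁻ x, f x ∂μ ≤ liminf (fun k ↦ ∫⁻ x, f x ∂μs k) atTop := by
  have trunc_lsc (N : ℕ) : LowerSemicontinuous fun x ↦ truncateToReal N (f x) :=
    (continuous_truncateToReal (natCast_ne_top N)).comp_lowerSemicontinuous hf
      (monotone_truncateToReal (natCast_ne_top N))
  have trunc_eq (N : ℕ) (x : Ω) : ENNReal.ofReal (truncateToReal N (f x)) = min (N : ℝ≥0∞) (f x) :=
    ofReal_toReal ((min_le_left _ _).trans_lt (natCast_lt_top N)).ne
  have iSup_trunc (x : Ω) : ⨆ N : ℕ, ENNReal.ofReal (truncateToReal N (f x)) = f x := by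
    simp_rw [trunc_eq, ← iSup_inf_eq, iSup_natCast, top_inf_eq]
  calc ∫⁻ x, f x ∂μ = ⨆ N : ℕ, ∫⁻ x, ENNReal.ofReal (truncateToReal N (f x)) ∂μ := by
        rw [← lintegral_iSup fun N ↦ (trunc_lsc N).measurable.ennreal_ofReal]
        · simp_rw [iSup_trunc]
        · intro N M hNM x
          simp_rw [trunc_eq]
          gcongr
    _ ≤ liminf (fun k ↦ ∫⁻ x, f x ∂μs k) atTop := iSup_le fun N ↦
        (lintegral_ofReal_le_liminf_of_lowerSemicontinuous hopen (trunc_lsc N)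
          fun x ↦ truncateToReal_nonneg).trans <|
        liminf_le_liminf <| .of_forall fun k ↦ lintegral_mono fun x ↦
          (le_iSup _ N).trans_eq (iSup_trunc x)

end LowerSemicontinuous

/-- `π` is a coupling of `ν` and `μ`: a measure with first marginal `ν` and second marginal `μ`. -/
structure IsCoupling {X Y : Type*} [MeasurableSpace X] [MeasurableSpace Y]
    (π : Measure (X × Y)) (ν : Measure X) (μ : Measure Y) : Prop where
  fst_eq : π.fst = ν
  snd_eq : π.snd = μ

namespace IsCoupling

variable {X Y : Type*} [MeasurableSpace X] [MeasurableSpace Y] {π : Measure (X × Y)}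
  {ν : Measure X} {μ : Measure Y}

lemma prod (ν : Measure X) (μ : Measure Y) [IsProbabilityMeasure ν] [IsProbabilityMeasure μ] :
    IsCoupling (ν.prod μ) ν μ :=
  ⟨Measure.fst_prod, Measure.snd_prod⟩

lemma isProbabilityMeasure [IsProbabilityMeasure ν] (h : IsCoupling π ν μ) :
    IsProbabilityMeasure π := by
  have : IsProbabilityMeasure (π.map Prod.fst) := by rw [← Measure.fst, h.fst_eq]; infer_instance
  exact Measure.isProbabilityMeasure_of_map Prod.fst

lemma lintegral_fst (h : IsCoupling π ν μ) {f : X → ℝ≥0∞} (hf : Measurable f) :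
    ∫⁻ p, f p.1 ∂π = ∫⁻ x, f x ∂ν := by
  rw [← h.fst_eq, Measure.fst, lintegral_map hf measurable_fst]

lemma lintegral_snd (h : IsCoupling π ν μ) {f : Y → ℝ≥0∞} (hf : Measurable f) :
    ∫⁻ p, f p.2 ∂π = ∫⁻ y, f y ∂μ := by
  rw [← h.snd_eq, Measure.snd, lintegral_map hf measurable_snd]

lemma map_prodMap {X' Y' : Type*} [MeasurableSpace X'] [MeasurableSpace Y'] (h : IsCoupling π ν μ)
    {f : X → X'} {g : Y → Y'} (hf : Measurable f) (hg : Measurable g) :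
    IsCoupling (π.map (Prod.map f g)) (ν.map f) (μ.map g) where
  fst_eq := by
    rw [← h.fst_eq, Measure.fst, Measure.fst, Measure.map_map measurable_fst (hf.prodMap hg),
      Measure.map_map hf measurable_fst]
    rfl
  snd_eq := by
    rw [← h.snd_eq, Measure.snd, Measure.snd, Measure.map_map measurable_snd (hf.prodMap hg),
      Measure.map_map hg measurable_snd]
    rfl

end IsCoupling

section Compactness

variable {X Y : Type*} [TopologicalSpace X] [PolishSpace X] [MeasurableSpace X] [BorelSpace X]
  [TopologicalSpace Y] [PolishSpace Y] [MeasurableSpace Y] [BorelSpace Y]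

lemma isTightMeasureSet_range_of_tendsto {νs : ℕ → ProbabilityMeasure X} {ν : ProbabilityMeasure X}
    (h : Tendsto νs atTop (𝓝 ν)) :
    IsTightMeasureSet (Set.range fun k ↦ (νs k : Measure X)) := by
  let _ := TopologicalSpace.upgradeIsCompletelyMetrizable X
  have hcompact : IsCompact (closure (insert ν (Set.range νs))) := by
    rw [h.isCompact_insert_range.isClosed.closure_eq]
    exact h.isCompact_insert_range
  refine (isTightMeasureSet_of_isCompact_closure hcompact).subset ?_
  rintro _ ⟨k, rfl⟩
  exact ⟨νs k, Set.mem_insert_of_mem _ ⟨k, rfl⟩, rfl⟩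

lemma exists_subseq_tendsto_isCoupling
    {νs : ℕ → ProbabilityMeasure X} {ν : ProbabilityMeasure X} (hν : Tendsto νs atTop (𝓝 ν))
    {μs : ℕ → ProbabilityMeasure Y} {μ : ProbabilityMeasure Y} (hμ : Tendsto μs atTop (𝓝 μ))
    {πs : ℕ → ProbabilityMeasure (X × Y)}
    (hπs : ∀ k, IsCoupling (πs k : Measure (X × Y)) (νs k) (μs k)) :
    ∃ (π : ProbabilityMeasure (X × Y)) (φ : ℕ → ℕ), StrictMono φ ∧
      Tendsto (πs ∘ φ) atTop (𝓝 π) ∧ IsCoupling (π : Measure (X × Y)) ν μ := by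
  have tight : IsTightMeasureSet {(π : Measure (X × Y)) | π ∈ Set.range πs} := by
    apply IsTightMeasureSet.prodMk
    · refine (isTightMeasureSet_range_of_tendsto hν).subset ?_
      rintro _ ⟨_, ⟨_, ⟨k, rfl⟩, rfl⟩, rfl⟩
      exact ⟨k, (hπs k).fst_eq.symm⟩
    · refine (isTightMeasureSet_range_of_tendsto hμ).subset ?_
      rintro _ ⟨_, ⟨_, ⟨k, rfl⟩, rfl⟩, rfl⟩
      exact ⟨k, (hπs k).snd_eq.symm⟩
  let _ := TopologicalSpace.upgradeIsCompletelyMetrizable X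
  let _ := TopologicalSpace.upgradeIsCompletelyMetrizable Y
  obtain ⟨π, -, φ, hφ, hlim⟩ := (isCompact_closure_of_isTightMeasureSet tight).tendsto_subseq
    (x := πs) fun k ↦ subset_closure ⟨k, rfl⟩
  have hfst := ((ProbabilityMeasure.continuous_map (Ω := X × Y) continuous_fst).tendsto π).comp hlim
  have hsnd := ((ProbabilityMeasure.continuous_map (Ω := X × Y) continuous_snd).tendsto π).comp hlim
  refine ⟨π, φ, hφ, hlim, ?_, ?_⟩
  · exact congrArg ProbabilityMeasure.toMeasure <| tendsto_nhds_unique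
      (hfst.congr fun k ↦ Subtype.ext (hπs (φ k)).fst_eq) (hν.comp hφ.tendsto_atTop)
  · exact congrArg ProbabilityMeasure.toMeasure <| tendsto_nhds_unique
      (hsnd.congr fun k ↦ Subtype.ext (hπs (φ k)).snd_eq) (hμ.comp hφ.tendsto_atTop)

lemma exists_isCoupling_lintegral_le {c : X × Y → ℝ≥0∞} (hc : LowerSemicontinuous c)
    {νs : ℕ → ProbabilityMeasure X} {ν : ProbabilityMeasure X} (hν : Tendsto νs atTop (𝓝 ν))
    {μs : ℕ → ProbabilityMeasure Y} {μ : ProbabilityMeasure Y} (hμ : Tendsto μs atTop (𝓝 μ))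
    {πs : ℕ → Measure (X × Y)} (hπs : ∀ k, IsCoupling (πs k) (νs k : Measure X) (μs k))
    {b : ℕ → ℝ≥0∞} (hb : ∀ k, ∫⁻ p, c p ∂πs k ≤ b k) {B : ℝ≥0∞} (hB : Tendsto b atTop (𝓝 B)) :
    ∃ π, IsCoupling π (ν : Measure X) (μ : Measure Y) ∧ ∫⁻ p, c p ∂π ≤ B := by
  obtain ⟨π, φ, hφ, hlim, hπ⟩ := exists_subseq_tendsto_isCoupling hν hμ
    (πs := fun k ↦ ⟨πs k, (hπs k).isProbabilityMeasure⟩) hπs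
  let _ := TopologicalSpace.upgradeIsCompletelyMetrizable X
  let _ := TopologicalSpace.upgradeIsCompletelyMetrizable Y
  refine ⟨π, hπ, ?_⟩
  calc ∫⁻ p, c p ∂(π : Measure (X × Y))
      ≤ liminf (fun k ↦ ∫⁻ p, c p ∂πs (φ k)) atTop :=
        lintegral_le_liminf_of_lowerSemicontinuous
          (fun _ ↦ ProbabilityMeasure.le_liminf_measure_open_of_tendsto hlim) hc
    _ ≤ liminf (b ∘ φ) atTop := liminf_le_liminf <| .of_forall fun k ↦ hb (φ k)
    _ = B := (hB.comp hφ.tendsto_atTop).liminf_eq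

end Compactness

/-- The optimal transport cost of an extended nonnegative cost `c` on pairs of points. Taking values
in `ℝ≥0∞` makes sums and multiples of costs free of side conditions. -/
noncomputable def transportCost {X Y : Type*} [MeasurableSpace X] [MeasurableSpace Y]
    (c : X × Y → ℝ≥0∞) (ν : Measure X) (μ : Measure Y) : ℝ≥0∞ :=
  ⨅ (π : Measure (X × Y)) (_ : IsCoupling π ν μ), ∫⁻ p, c p ∂π

section TransportCost

variable {X Y : Type*} [MeasurableSpace X] [MeasurableSpace Y]

lemma IsCoupling.transportCost_le {π : Measure (X × Y)} {ν : Measure X} {μ : Measure Y}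
    (h : IsCoupling π ν μ) (c : X × Y → ℝ≥0∞) : transportCost c ν μ ≤ ∫⁻ p, c p ∂π :=
  iInf₂_le π h

lemma transportCost_const_mul {r : ℝ≥0∞} (hr₀ : r ≠ 0) (hr : r ≠ ∞) (c : X × Y → ℝ≥0∞)
    (ν : Measure X) (μ : Measure Y) :
    transportCost (fun p ↦ r * c p) ν μ = r * transportCost c ν μ := by
  simp_rw [transportCost, ENNReal.mul_iInf_of_ne hr₀ hr, lintegral_const_mul' _ _ hr]

lemma transportCost_map_le {X' Y' : Type*} [MeasurableSpace X'] [MeasurableSpace Y']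
    {f : X → X'} {g : Y → Y'} (hf : Measurable f) (hg : Measurable g) (c : X' × Y' → ℝ≥0∞)
    (ν : Measure X) (μ : Measure Y) :
    transportCost c (ν.map f) (μ.map g) ≤ transportCost (c ∘ Prod.map f g) ν μ :=
  le_iInf₂ fun _ hπ ↦ ((hπ.map_prodMap hf hg).transportCost_le c).trans (lintegral_map_le _ _)

variable [TopologicalSpace X] [PolishSpace X] [BorelSpace X]
  [TopologicalSpace Y] [PolishSpace Y] [BorelSpace Y] {c : X × Y → ℝ≥0∞}

lemma exists_isCoupling_lintegral_eq_transportCost (hc : LowerSemicontinuous c)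
    (ν : Measure X) (μ : Measure Y) [IsProbabilityMeasure ν] [IsProbabilityMeasure μ] :
    ∃ π, IsCoupling π ν μ ∧ ∫⁻ p, c p ∂π = transportCost c ν μ := by
  have hcost : transportCost c ν μ = sInf ((fun π ↦ ∫⁻ p, c p ∂π) '' {π | IsCoupling π ν μ}) :=
    sInf_image.symm
  obtain ⟨b, -, hb, hmem⟩ := exists_seq_tendsto_sInf
    (Set.Nonempty.image (fun π ↦ ∫⁻ p, c p ∂π) (s := {π | IsCoupling π ν μ})
      ⟨ν.prod μ, IsCoupling.prod ν μ⟩) (OrderBot.bddBelow _)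
  choose πs hπs hπs_eq using hmem
  let ν' : ProbabilityMeasure X := ⟨ν, ‹_›⟩
  let μ' : ProbabilityMeasure Y := ⟨μ, ‹_›⟩
  obtain ⟨π, hπ, hle⟩ := exists_isCoupling_lintegral_le hc (tendsto_const_nhds (x := ν'))
    (tendsto_const_nhds (x := μ')) hπs (fun k ↦ (hπs_eq k).le) hb
  exact ⟨π, hπ, (hle.trans_eq hcost.symm).antisymm (hπ.transportCost_le c)⟩

lemma transportCost_le_of_tendsto (hc : LowerSemicontinuous c)
    {νs : ℕ → ProbabilityMeasure X} {ν : ProbabilityMeasure X} (hν : Tendsto νs atTop (𝓝 ν))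
    (μ : ProbabilityMeasure Y) {B : ℝ≥0∞}
    (hB : ∀ k, transportCost c (νs k : Measure X) (μ : Measure Y) ≤ B) :
    transportCost c (ν : Measure X) (μ : Measure Y) ≤ B := by
  choose πs hπs hπs_eq using fun k ↦
    exists_isCoupling_lintegral_eq_transportCost hc (νs k : Measure X) (μ : Measure Y)
  obtain ⟨π, hπ, hle⟩ := exists_isCoupling_lintegral_le hc hν (tendsto_const_nhds (x := μ)) hπs
    (fun k ↦ (hπs_eq k).trans_le (hB k)) tendsto_const_nhds
  exact (hπ.transportCost_le c).trans hle

end TransportCost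

section Entropy

variable {A Y : Type*} [MeasurableSpace A] [MeasurableSpace Y]

lemma compProd_eq_withDensity_rnDeriv [MeasurableSpace.CountableOrCountablyGenerated A Y]
    {ρ : Measure A} [SFinite ρ] {κ η : Kernel A Y} [IsFiniteKernel κ] [IsFiniteKernel η]
    (hac : ∀ᵐ a ∂ρ, κ a ≪ η a) :
    ρ ⊗ₘ κ = (ρ ⊗ₘ η).withDensity fun p ↦ κ.rnDeriv η p.1 p.2 := by
  rw [← Measure.compProd_withDensity (κ.measurable_rnDeriv η)]
  refine Measure.compProd_congr ?_
  filter_upwards [hac] with a ha using (Kernel.withDensity_rnDeriv_eq ha).symm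

lemma lintegral_klDiv_le_klDiv_compProd [MeasurableSpace.CountableOrCountablyGenerated A Y]
    (ρ : Measure A) [IsFiniteMeasure ρ] (κ η : Kernel A Y) [IsFiniteKernel κ] [IsFiniteKernel η] :
    ∫⁻ a, klDiv (κ a) (η a) ∂ρ ≤ klDiv (ρ ⊗ₘ κ) (ρ ⊗ₘ η) := by
  by_cases hac : ρ ⊗ₘ κ ≪ ρ ⊗ₘ η
  swap
  · simp [klDiv_of_not_ac hac]
  have hac_ae : ∀ᵐ a ∂ρ, κ a ≪ η a := Measure.absolutelyContinuous_compProd_right_iff.1 hac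
  have hderiv : (ρ ⊗ₘ κ).rnDeriv (ρ ⊗ₘ η) =ᵐ[ρ ⊗ₘ η] fun p ↦ κ.rnDeriv η p.1 p.2 := by
    rw [compProd_eq_withDensity_rnDeriv hac_ae]
    exact Measure.rnDeriv_withDensity _ (κ.measurable_rnDeriv η)
  apply le_of_eq
  calc ∫⁻ a, klDiv (κ a) (η a) ∂ρ
      = ∫⁻ a, ∫⁻ y, ENNReal.ofReal (klFun (κ.rnDeriv η a y).toReal) ∂η a ∂ρ := by
        refine lintegral_congr_ae ?_
        filter_upwards [hac_ae] with a ha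
        rw [klDiv_eq_lintegral_klFun_of_ac ha]
        refine lintegral_congr_ae ?_
        filter_upwards [Kernel.rnDeriv_eq_rnDeriv_measure (κ := κ) (η := η) (a := a)] with y hy
        rw [hy]
    _ = ∫⁻ p, ENNReal.ofReal (klFun (κ.rnDeriv η p.1 p.2).toReal) ∂(ρ ⊗ₘ η) :=
        (Measure.lintegral_compProd (f := fun p ↦
          ENNReal.ofReal (klFun (κ.rnDeriv η p.1 p.2).toReal)) (by fun_prop)).symm
    _ = klDiv (ρ ⊗ₘ κ) (ρ ⊗ₘ η) := by
        rw [klDiv_eq_lintegral_klFun_of_ac hac]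
        refine lintegral_congr_ae ?_
        filter_upwards [hderiv] with p hp
        rw [hp]

lemma klDiv_prod_eq_add [StandardBorelSpace Y] [Nonempty Y] (ν : Measure (A × Y))
    [IsFiniteMeasure ν] (μ₁ : Measure A) [IsFiniteMeasure μ₁] (μ₂ : Measure Y)
    [IsProbabilityMeasure μ₂] :
    klDiv ν (μ₁.prod μ₂) = klDiv ν.fst μ₁ + klDiv ν (ν.fst.prod μ₂) := by
  have := klDiv_compProd_eq_add ν.fst μ₁ ν.condKernel (Kernel.const A μ₂)
  rwa [Measure.disintegrate, Measure.compProd_const, Measure.compProd_const] at this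

end Entropy

/-- The cost on pairs of points of a product space that adds the costs of the two coordinates. -/
def prodCost {X X' Y Y' : Type*} (c₁ : X × X' → ℝ≥0∞) (c₂ : Y × Y' → ℝ≥0∞) :
    (X × Y) × (X' × Y') → ℝ≥0∞ :=
  fun p ↦ c₁ (p.1.1, p.2.1) + c₂ (p.1.2, p.2.2)

lemma lowerSemicontinuous_prodCost {X X' Y Y' : Type*} [TopologicalSpace X] [TopologicalSpace X']
    [TopologicalSpace Y] [TopologicalSpace Y'] {c₁ : X × X' → ℝ≥0∞} {c₂ : Y × Y' → ℝ≥0∞}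
    (hc₁ : LowerSemicontinuous c₁) (hc₂ : LowerSemicontinuous c₂) :
    LowerSemicontinuous (prodCost c₁ c₂) :=
  (hc₁.comp (g := fun p : (X × Y) × (X' × Y') ↦ (p.1.1, p.2.1)) (by fun_prop)).add
    (hc₂.comp (g := fun p : (X × Y) × (X' × Y') ↦ (p.1.2, p.2.2)) (by fun_prop))

section Gluing

lemma measurable_prodProdProdComm {X X' Y Y' : Type*} [MeasurableSpace X] [MeasurableSpace X']
    [MeasurableSpace Y] [MeasurableSpace Y'] : Measurable (Equiv.prodProdProdComm X X' Y Y') := by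
  unfold Equiv.prodProdProdComm
  dsimp
  fun_prop

variable {X X' Y Y' : Type*} [MeasurableSpace X] [MeasurableSpace X'] [MeasurableSpace Y]
  [MeasurableSpace Y']

lemma IsCoupling.compProd {π : Measure (X × X')} [SFinite π] {ν : Measure X} {μ : Measure X'}
    (hπ : IsCoupling π ν μ) {κ : Kernel X Y} [IsSFiniteKernel κ] {η : Kernel X' Y'}
    [IsSFiniteKernel η] {K : Kernel (X × X') (Y × Y')} [IsSFiniteKernel K]
    (hK : ∀ p, IsCoupling (K p) (κ p.1) (η p.2)) :
    IsCoupling ((π ⊗ₘ K).map (Equiv.prodProdProdComm X X' Y Y')) (ν ⊗ₘ κ) (μ ⊗ₘ η) where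
  fst_eq := by
    have : SFinite ν := hπ.fst_eq ▸ inferInstance
    refine Measure.ext_of_lintegral _ fun f hf ↦ ?_
    calc ∫⁻ z, f z ∂((π ⊗ₘ K).map (Equiv.prodProdProdComm X X' Y Y')).fst
        = ∫⁻ p, ∫⁻ r, f (p.1, r.1) ∂K p ∂π := by
          rw [Measure.fst, lintegral_map hf measurable_fst,
            lintegral_map (by fun_prop) measurable_prodProdProdComm,
            Measure.lintegral_compProd (by fun_prop)]
          rfl
      _ = ∫⁻ p, ∫⁻ y, f (p.1, y) ∂κ p.1 ∂π :=
          lintegral_congr fun p ↦ (hK p).lintegral_fst (f := fun y ↦ f (p.1, y)) (by fun_prop)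
      _ = ∫⁻ z, f z ∂(ν ⊗ₘ κ) := by
          rw [hπ.lintegral_fst hf.lintegral_kernel_prod_right', Measure.lintegral_compProd hf]
  snd_eq := by
    have : SFinite μ := hπ.snd_eq ▸ inferInstance
    refine Measure.ext_of_lintegral _ fun f hf ↦ ?_
    calc ∫⁻ z, f z ∂((π ⊗ₘ K).map (Equiv.prodProdProdComm X X' Y Y')).snd
        = ∫⁻ p, ∫⁻ r, f (p.2, r.2) ∂K p ∂π := by
          rw [Measure.snd, lintegral_map hf measurable_snd,
            lintegral_map (by fun_prop) measurable_prodProdProdComm,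
            Measure.lintegral_compProd (by fun_prop)]
          rfl
      _ = ∫⁻ p, ∫⁻ y, f (p.2, y) ∂η p.2 ∂π :=
          lintegral_congr fun p ↦ (hK p).lintegral_snd (f := fun y ↦ f (p.2, y)) (by fun_prop)
      _ = ∫⁻ z, f z ∂(μ ⊗ₘ η) := by
          rw [hπ.lintegral_snd hf.lintegral_kernel_prod_right', Measure.lintegral_compProd hf]

lemma lintegral_prodCost_compProd {c₁ : X × X' → ℝ≥0∞} (hc₁ : Measurable c₁)
    {c₂ : Y × Y' → ℝ≥0∞} (hc₂ : Measurable c₂) (π : Measure (X × X')) [SFinite π]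
    (K : Kernel (X × X') (Y × Y')) [IsMarkovKernel K] :
    ∫⁻ p, prodCost c₁ c₂ p ∂((π ⊗ₘ K).map (Equiv.prodProdProdComm X X' Y Y')) =
      ∫⁻ p, c₁ p ∂π + ∫⁻ p, ∫⁻ r, c₂ r ∂K p ∂π := by
  have hcost : Measurable (prodCost c₁ c₂) := by unfold prodCost; fun_prop
  rw [lintegral_map hcost measurable_prodProdProdComm,
    Measure.lintegral_compProd (f := fun z ↦ prodCost c₁ c₂ (Equiv.prodProdProdComm X X' Y Y' z))
      (hcost.comp measurable_prodProdProdComm), ← lintegral_add_left hc₁]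
  refine lintegral_congr fun p ↦ ?_
  simp only [prodCost, Equiv.prodProdProdComm_apply, Prod.mk.eta]
  rw [lintegral_add_left measurable_const, lintegral_const, measure_univ, mul_one]

variable {ι : Type*} [Countable ι] [MeasurableSpace ι] [MeasurableSingletonClass ι]
  [TopologicalSpace X] [PolishSpace X] [BorelSpace X]
  [TopologicalSpace X'] [PolishSpace X'] [BorelSpace X']
  [TopologicalSpace Y] [PolishSpace Y] [BorelSpace Y]
  [TopologicalSpace Y'] [PolishSpace Y'] [BorelSpace Y']

lemma transportCost_prodCost_compProd_comap_le {c₁ : X × X' → ℝ≥0∞} (hc₁ : LowerSemicontinuous c₁)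
    {c₂ : Y × Y' → ℝ≥0∞} (hc₂ : LowerSemicontinuous c₂)
    (ν : Measure X) [IsProbabilityMeasure ν] (κ : Kernel ι Y) [IsMarkovKernel κ]
    {q : X → ι} (hq : Measurable q) (μ₁ : Measure X') [IsProbabilityMeasure μ₁]
    (μ₂ : Measure Y') [IsProbabilityMeasure μ₂] :
    transportCost (prodCost c₁ c₂) (ν ⊗ₘ κ.comap q hq) (μ₁.prod μ₂) ≤
      transportCost c₁ ν μ₁ + ∫⁻ x, transportCost c₂ (κ (q x)) μ₂ ∂ν := by
  obtain ⟨π, hπ, hπ_cost⟩ := exists_isCoupling_lintegral_eq_transportCost hc₁ ν μ₁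
  have : IsProbabilityMeasure π := hπ.isProbabilityMeasure
  choose g hg hg_cost using fun i ↦ exists_isCoupling_lintegral_eq_transportCost hc₂ (κ i) μ₂
  let G : Kernel ι (Y × Y') := ⟨g, measurable_of_countable g⟩
  have : IsMarkovKernel G := ⟨fun i ↦ (hg i).isProbabilityMeasure⟩
  let K : Kernel (X × X') (Y × Y') := G.comap (fun p ↦ q p.1) (hq.comp measurable_fst)
  have hglued := hπ.compProd (κ := κ.comap q hq) (η := Kernel.const X' μ₂) (K := K)
    fun p ↦ hg (q p.1)
  rw [Measure.compProd_const] at hglued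
  calc transportCost (prodCost c₁ c₂) (ν ⊗ₘ κ.comap q hq) (μ₁.prod μ₂)
      ≤ ∫⁻ p, c₁ p ∂π + ∫⁻ p, ∫⁻ r, c₂ r ∂K p ∂π :=
        (hglued.transportCost_le _).trans_eq
          (lintegral_prodCost_compProd hc₁.measurable hc₂.measurable π K)
    _ = transportCost c₁ ν μ₁ + ∫⁻ p, transportCost c₂ (κ (q p.1)) μ₂ ∂π := by
        rw [hπ_cost]
        exact congrArg _ (lintegral_congr fun p ↦ hg_cost (q p.1))
    _ = transportCost c₁ ν μ₁ + ∫⁻ x, transportCost c₂ (κ (q x)) μ₂ ∂ν := by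
        rw [hπ.lintegral_fst (f := fun x ↦ transportCost c₂ (κ (q x)) μ₂)
          ((measurable_of_countable fun i ↦ transportCost c₂ (κ i) μ₂).comp hq)]

end Gluing

section Quantization

variable {X Y ι : Type*} [MeasurableSpace X] [MeasurableSpace Y] [MeasurableSpace ι] {q : X → ι}

lemma fst_map_prodMap_id (ν : Measure (X × Y)) (hq : Measurable q) :
    (ν.map (Prod.map q id)).fst = ν.fst.map q := by
  rw [Measure.fst, Measure.fst, Measure.map_map measurable_fst (hq.prodMap measurable_id),
    Measure.map_map hq measurable_fst]
  rfl

lemma map_compProd_comap (ρ : Measure X) [SFinite ρ] (κ : Kernel ι Y) [IsSFiniteKernel κ]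
    (hq : Measurable q) :
    (ρ ⊗ₘ κ.comap q hq).map (Prod.map q id) = ρ.map q ⊗ₘ κ := by
  refine Measure.ext_of_lintegral _ fun f hf ↦ ?_
  rw [lintegral_map hf (hq.prodMap measurable_id), Measure.lintegral_compProd (by fun_prop),
    Measure.lintegral_compProd hf, lintegral_map hf.lintegral_kernel_prod_right' hq]
  rfl

variable [StandardBorelSpace Y] [Nonempty Y]

/-- The measure with the same first marginal as `ν` in which the conditional law of the second
coordinate depends on the first coordinate `x` only through `q x`. -/
noncomputable def quantize (q : X → ι) (hq : Measurable q) (ν : Measure (X × Y))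
    [IsFiniteMeasure ν] : Measure (X × Y) :=
  ν.fst ⊗ₘ (ν.map (Prod.map q id)).condKernel.comap q hq

instance (hq : Measurable q) (ν : Measure (X × Y)) [IsProbabilityMeasure ν] :
    IsProbabilityMeasure (quantize q hq ν) := by
  unfold quantize; infer_instance

lemma map_quantize (hq : Measurable q) (ν : Measure (X × Y)) [IsFiniteMeasure ν] :
    (quantize q hq ν).map (Prod.map q id) = ν.map (Prod.map q id) := by
  rw [quantize, map_compProd_comap, ← fst_map_prodMap_id ν hq, Measure.disintegrate]

lemma lintegral_klDiv_condKernel_map_le (hq : Measurable q) (ν : Measure (X × Y))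
    [IsFiniteMeasure ν] (μ : Measure Y) [IsProbabilityMeasure μ] [Countable ι]
    [MeasurableSingletonClass ι] :
    ∫⁻ x, klDiv ((ν.map (Prod.map q id)).condKernel (q x)) μ ∂ν.fst ≤
      klDiv ν (ν.fst.prod μ) := by
  set ρ := ν.map (Prod.map q id)
  have hqid : Measurable (Prod.map q (id : Y → Y)) := hq.prodMap measurable_id
  have hprod : ρ.fst.prod μ = (ν.fst.prod μ).map (Prod.map q id) := by
    rw [fst_map_prodMap_id ν hq, ← Measure.map_prod_map _ _ hq measurable_id, Measure.map_id]
  calc ∫⁻ x, klDiv (ρ.condKernel (q x)) μ ∂ν.fst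
      = ∫⁻ i, klDiv (ρ.condKernel i) (Kernel.const ι μ i) ∂ρ.fst := by
        rw [fst_map_prodMap_id ν hq, lintegral_map (measurable_of_countable _) hq]
        rfl
    _ ≤ klDiv ρ (ρ.fst.prod μ) := by
        simpa [Measure.disintegrate] using
          lintegral_klDiv_le_klDiv_compProd ρ.fst ρ.condKernel (Kernel.const ι μ)
    _ ≤ klDiv ν (ν.fst.prod μ) := hprod ▸ klDiv_map_le _ _ hqid

end Quantization

section Cells

/-- The position of `x` relative to the first `k` sets of the sequence `U`; its level sets are the
atoms of the partition of the space generated by these sets. -/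
def cell {X : Type*} (U : ℕ → Set X) (k : ℕ) (x : X) : Fin k → Prop :=
  fun j ↦ x ∈ U j

/-- The sets that are unions of the cells of order `k`, for all large `k`. -/
def eventualCellUnions {X : Type*} (U : ℕ → Set X) : Set (Set X) :=
  {A | ∀ᶠ k in atTop, ∃ T, cell U k ⁻¹' T = A}

variable {X : Type*} {U : ℕ → Set X}

lemma mem_eventualCellUnions (U : ℕ → Set X) (j : ℕ) : U j ∈ eventualCellUnions U := by
  filter_upwards [eventually_gt_atTop j] with k hk
  exact ⟨{f | f ⟨j, hk⟩}, rfl⟩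

lemma isPiSystem_eventualCellUnions (U : ℕ → Set X) : IsPiSystem (eventualCellUnions U) := by
  intro A hA B hB _
  filter_upwards [hA, hB] with k ⟨S, hS⟩ ⟨T, hT⟩
  exact ⟨S ∩ T, by rw [Set.preimage_inter, hS, hT]⟩

variable [MeasurableSpace X]

lemma measurable_cell (hU : ∀ j, MeasurableSet (U j)) (k : ℕ) : Measurable (cell U k) :=
  measurable_pi_iff.2 fun j ↦ measurableSet_setOfPred.1 (hU j)

lemma measurableSet_of_mem_eventualCellUnions (hU : ∀ j, MeasurableSet (U j)) {A : Set X}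
    (hA : A ∈ eventualCellUnions U) : MeasurableSet A := by
  obtain ⟨k, T, rfl⟩ := hA.exists
  exact measurable_cell hU k T.toFinite.measurableSet

lemma tendsto_of_map_cell_eq [TopologicalSpace X] [SecondCountableTopology X]
    [OpensMeasurableSpace X] {Y : Type*} [TopologicalSpace Y] [SecondCountableTopology Y]
    [MeasurableSpace Y] [OpensMeasurableSpace Y]
    (hU : TopologicalSpace.IsTopologicalBasis (Set.range U))
    {νs : ℕ → ProbabilityMeasure (X × Y)} {ν : ProbabilityMeasure (X × Y)}
    (hν : ∀ k, (νs k : Measure (X × Y)).map (Prod.map (cell U k) id) =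
      (ν : Measure (X × Y)).map (Prod.map (cell U k) id)) :
    Tendsto νs atTop (𝓝 ν) := by
  have hU_open (j : ℕ) : IsOpen (U j) := hU.isOpen ⟨j, rfl⟩
  have hU_meas (j : ℕ) : MeasurableSet (U j) := (hU_open j).measurableSet
  have hpi := (isPiSystem_eventualCellUnions U).prod
    (MeasurableSpace.isPiSystem_measurableSet (α := Y))
  refine hpi.tendsto_probabilityMeasure_of_tendsto_of_mem ?_ ?_ ?_
  · rintro _ ⟨A, hA, B, hB, rfl⟩
    exact (measurableSet_of_mem_eventualCellUnions hU_meas hA).prod hB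
  · rintro u hu ⟨x, y⟩ hxy
    obtain ⟨V, W, hV, hW, hxV, hyW, hVW⟩ := isOpen_prod_iff.1 hu x y hxy
    obtain ⟨_, ⟨j, rfl⟩, hxj, hjV⟩ := hU.exists_subset_of_mem_open hxV hV
    exact ⟨U j ×ˢ W, ⟨U j, mem_eventualCellUnions U j, W, hW.measurableSet, rfl⟩,
      ((hU_open j).prod hW).mem_nhds ⟨hxj, hyW⟩, (Set.prod_mono hjV le_rfl).trans hVW⟩
  · rintro _ ⟨A, hA, B, hB, rfl⟩
    refine tendsto_const_nhds.congr' ?_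
    filter_upwards [hA] with k ⟨T, hT⟩
    have hTB := congrArg (· (T ×ˢ B)) (hν k)
    have hmeas : Measurable (Prod.map (cell U k) (id : Y → Y)) :=
      (measurable_cell hU_meas k).prodMap measurable_id
    simp only [Measure.map_apply hmeas (T.toFinite.measurableSet.prod hB),
      Set.preimage_prod_map_prod, hT, Set.preimage_id] at hTB
    exact congrArg ENNReal.toNNReal hTB.symm

end Cells

/-- The linear transport-entropy inequality with additive constant `b`: the form that tensorizes
directly, to which an inequality with a convex `α` reduces by taking affine minorants of `α`. -/
def TransportEntropyIneq {X : Type*} [MeasurableSpace X] (c : X × X → ℝ≥0∞) (b : ℝ≥0∞)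
    (μ : Measure X) : Prop :=
  ∀ (ν : Measure X) [IsProbabilityMeasure ν], transportCost c ν μ ≤ klDiv ν μ + b

namespace TransportEntropyIneq

lemma zero_cost {X : Type*} [MeasurableSpace X] (b : ℝ≥0∞) (μ : Measure X)
    [IsProbabilityMeasure μ] : TransportEntropyIneq 0 b μ := fun ν _ ↦
  ((IsCoupling.prod ν μ).transportCost_le 0).trans (by simp)

lemma map {X Y : Type*} [MeasurableSpace X] [MeasurableSpace Y] {c : X × X → ℝ≥0∞} {b : ℝ≥0∞}
    {μ : Measure X} [IsFiniteMeasure μ] (h : TransportEntropyIneq c b μ) (e : X ≃ᵐ Y) :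
    TransportEntropyIneq (c ∘ Prod.map e.symm e.symm) b (μ.map e) := fun ν _ ↦ by
  have : IsProbabilityMeasure (ν.map e.symm) :=
    Measure.isProbabilityMeasure_map e.symm.measurable.aemeasurable
  have hν : (ν.map e.symm).map e = ν := by simp
  have hc : (c ∘ Prod.map e.symm e.symm) ∘ Prod.map e e = c := by
    funext ⟨x, y⟩
    simp
  calc transportCost (c ∘ Prod.map e.symm e.symm) ν (μ.map e)
      ≤ transportCost c (ν.map e.symm) μ := by
        simpa only [hν, hc] using transportCost_map_le e.measurable e.measurable
          (c ∘ Prod.map e.symm e.symm) (ν.map e.symm) μ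
    _ ≤ klDiv (ν.map e.symm) μ + b := h _
    _ ≤ klDiv ν (μ.map e) + b := by
        gcongr
        simpa using klDiv_map_le ν (μ.map e) e.symm.measurable

section Prod

variable {X Y : Type*} [TopologicalSpace X] [PolishSpace X] [MeasurableSpace X] [BorelSpace X]
  [TopologicalSpace Y] [PolishSpace Y] [MeasurableSpace Y] [BorelSpace Y]
  {c₁ : X × X → ℝ≥0∞} {c₂ : Y × Y → ℝ≥0∞} {b₁ b₂ : ℝ≥0∞}
  {μ₁ : Measure X} {μ₂ : Measure Y} [IsProbabilityMeasure μ₁] [IsProbabilityMeasure μ₂]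

lemma transportCost_quantize_le [Nonempty Y] (h₁ : TransportEntropyIneq c₁ b₁ μ₁)
    (h₂ : TransportEntropyIneq c₂ b₂ μ₂) (hc₁ : LowerSemicontinuous c₁)
    (hc₂ : LowerSemicontinuous c₂) {ι : Type*} [Countable ι] [MeasurableSpace ι]
    [MeasurableSingletonClass ι] {q : X → ι} (hq : Measurable q) (ν : Measure (X × Y))
    [IsProbabilityMeasure ν] :
    transportCost (prodCost c₁ c₂) (quantize q hq ν) (μ₁.prod μ₂) ≤
      klDiv ν (μ₁.prod μ₂) + (b₁ + b₂) := by
  have : IsProbabilityMeasure (ν.map (Prod.map q (id : Y → Y))) :=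
    Measure.isProbabilityMeasure_map (hq.prodMap measurable_id).aemeasurable
  set κ := (ν.map (Prod.map q id)).condKernel
  calc transportCost (prodCost c₁ c₂) (quantize q hq ν) (μ₁.prod μ₂)
      ≤ transportCost c₁ ν.fst μ₁ + ∫⁻ x, transportCost c₂ (κ (q x)) μ₂ ∂ν.fst :=
        transportCost_prodCost_compProd_comap_le hc₁ hc₂ ν.fst κ hq μ₁ μ₂
    _ ≤ (klDiv ν.fst μ₁ + b₁) + ∫⁻ x, (klDiv (κ (q x)) μ₂ + b₂) ∂ν.fst := by
        gcongr with x
        exacts [h₁ _, h₂ _]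
    _ = (klDiv ν.fst μ₁ + b₁) + (∫⁻ x, klDiv (κ (q x)) μ₂ ∂ν.fst + b₂) := by
        rw [lintegral_add_right _ measurable_const, lintegral_const, measure_univ, mul_one]
    _ ≤ (klDiv ν.fst μ₁ + b₁) + (klDiv ν (ν.fst.prod μ₂) + b₂) := by
        gcongr
        exact lintegral_klDiv_condKernel_map_le hq ν μ₂
    _ = klDiv ν (μ₁.prod μ₂) + (b₁ + b₂) := by rw [klDiv_prod_eq_add ν μ₁ μ₂, add_add_add_comm]

lemma prod (h₁ : TransportEntropyIneq c₁ b₁ μ₁) (h₂ : TransportEntropyIneq c₂ b₂ μ₂)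
    (hc₁ : LowerSemicontinuous c₁) (hc₂ : LowerSemicontinuous c₂) :
    TransportEntropyIneq (prodCost c₁ c₂) (b₁ + b₂) (μ₁.prod μ₂) := fun ν hν ↦ by
  have : Nonempty X := nonempty_of_isProbabilityMeasure μ₁
  have : Nonempty Y := nonempty_of_isProbabilityMeasure μ₂
  obtain ⟨U, hU⟩ : ∃ U : ℕ → Set X, TopologicalSpace.IsTopologicalBasis (Set.range U) := by
    have hbasis := TopologicalSpace.isBasis_countableBasis X
    have hne : (TopologicalSpace.countableBasis X).Nonempty :=
      Set.nonempty_iff_ne_empty.2 fun h ↦ Set.empty_ne_univ (by simpa [h] using hbasis.sUnion_eq)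
    obtain ⟨U, hU⟩ := (TopologicalSpace.countable_countableBasis X).exists_eq_range hne
    exact ⟨U, hU ▸ hbasis⟩
  have hq := measurable_cell fun j ↦ (hU.isOpen ⟨j, rfl⟩).measurableSet
  let νs (k : ℕ) : ProbabilityMeasure (X × Y) := ⟨quantize (cell U k) (hq k) ν, inferInstance⟩
  have hνs : Tendsto νs atTop (𝓝 ⟨ν, hν⟩) :=
    tendsto_of_map_cell_eq hU fun k ↦ map_quantize (hq k) ν
  exact transportCost_le_of_tendsto (lowerSemicontinuous_prodCost hc₁ hc₂) hνs
    ⟨μ₁.prod μ₂, inferInstance⟩ fun k ↦ h₁.transportCost_quantize_le h₂ hc₁ hc₂ (hq k) ν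

end Prod

end TransportEntropyIneq

section Pi

/-- The cost on pairs of points of a finite product that adds the costs of the coordinates, the
`c^{⊕n}` of the paper with a possibly different cost in each coordinate. -/
noncomputable def piCost {n : ℕ} {X : Fin n → Type*} (c : ∀ i, X i × X i → ℝ≥0∞) :
    (∀ i, X i) × (∀ i, X i) → ℝ≥0∞ :=
  fun p ↦ ∑ i, c i (p.1 i, p.2 i)

lemma lowerSemicontinuous_piCost {n : ℕ} {X : Fin n → Type*} [∀ i, TopologicalSpace (X i)]
    {c : ∀ i, X i × X i → ℝ≥0∞} (hc : ∀ i, LowerSemicontinuous (c i)) :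
    LowerSemicontinuous (piCost c) :=
  lowerSemicontinuous_sum fun i _ ↦
    (hc i).comp (g := fun p : (∀ i, X i) × (∀ i, X i) ↦ (p.1 i, p.2 i)) (by fun_prop)

lemma piCost_succ {n : ℕ} {X : Fin (n + 1) → Type*} [∀ i, MeasurableSpace (X i)]
    (c : ∀ i, X i × X i → ℝ≥0∞) :
    piCost c = prodCost (c 0) (piCost fun i ↦ c i.succ) ∘
      Prod.map (MeasurableEquiv.piFinSuccAbove X 0) (MeasurableEquiv.piFinSuccAbove X 0) :=
  funext fun _ ↦ Fin.sum_univ_succ _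

lemma TransportEntropyIneq.pi {n : ℕ} {X : Fin n → Type*} [∀ i, TopologicalSpace (X i)]
    [∀ i, PolishSpace (X i)] [∀ i, MeasurableSpace (X i)] [∀ i, BorelSpace (X i)]
    {c : ∀ i, X i × X i → ℝ≥0∞} {b : Fin n → ℝ≥0∞}
    {μ : ∀ i, Measure (X i)} [∀ i, IsProbabilityMeasure (μ i)]
    (h : ∀ i, TransportEntropyIneq (c i) (b i) (μ i)) (hc : ∀ i, LowerSemicontinuous (c i)) :
    TransportEntropyIneq (piCost c) (∑ i, b i) (Measure.pi μ) := by
  induction n with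
  | zero => exact zero_cost _ _
  | succ n ih =>
    have hsplit := (h 0).prod (ih (fun i ↦ h i.succ) fun i ↦ hc i.succ) (hc 0)
      (lowerSemicontinuous_piCost fun i ↦ hc i.succ)
    rw [Fin.sum_univ_succ, piCost_succ, ← (measurePreserving_piFinSuccAbove μ 0).symm.map_eq]
    exact hsplit.map (MeasurableEquiv.piFinSuccAbove X 0).symm

end Pi

section AffineMinorants

variable {α : ℝ → ℝ}

lemma exists_affine_minorant {S : Set ℝ} (hα : ConvexOn ℝ S α) {t : ℝ} (ht : t ∈ interior S) :
    ∃ m : ℝ, ∀ s ∈ S, α t + m * (s - t) ≤ α s := by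
  refine ⟨derivWithin α (Set.Ioi t) t, fun s hs ↦ ?_⟩
  rcases lt_trichotomy s t with hst | rfl | hts
  · have hslope := (hα.slope_le_leftDeriv_of_mem_interior hs ht hst).trans
      (hα.leftDeriv_le_rightDeriv_of_mem_interior ht)
    rw [slope_def_field, div_le_iff₀ (by linarith)] at hslope
    linarith
  · simp
  · have hslope := hα.rightDeriv_le_slope_of_mem_interior ht hs hts
    rw [slope_def_field, le_div_iff₀ (by linarith)] at hslope
    linarith

lemma ofReal_mul_le_extRealFun_add {m d : ℝ} (hm : 0 ≤ m)
    (h : ∀ s, 0 ≤ s → m * s ≤ α s + d) (x : ℝ≥0∞) :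
    ENNReal.ofReal m * x ≤ extRealFun α x + ENNReal.ofReal d := by
  have hx : x = ⨆ N : ℕ, min (N : ℝ≥0∞) x := by rw [← iSup_inf_eq, iSup_natCast, top_inf_eq]
  conv_lhs => rw [hx, ENNReal.mul_iSup]
  refine iSup_le fun N ↦ ?_
  lift min (N : ℝ≥0∞) x to NNReal using
    ((min_le_left _ _).trans_lt (natCast_lt_top N)).ne with t ht
  have htx : ENNReal.ofReal t ≤ x := by
    rw [ofReal_coe_nnreal, ht]
    exact min_le_right _ _
  calc ENNReal.ofReal m * t = ENNReal.ofReal (m * t) := by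
        rw [ENNReal.ofReal_mul hm, ofReal_coe_nnreal]
    _ ≤ ENNReal.ofReal (α t) + ENNReal.ofReal d :=
        (ENNReal.ofReal_le_ofReal (h t t.coe_nonneg)).trans ENNReal.ofReal_add_le
    _ ≤ extRealFun α x + ENNReal.ofReal d := by
        gcongr
        exact le_iSup₂_of_le (t : ℝ) ⟨t.coe_nonneg, htx⟩ le_rfl

lemma extRealFun_le_of_forall_affine_le (hα : ConvexOn ℝ (Set.Ici 0) α) (hα_zero : α 0 ≤ 0)
    {x H : ℝ≥0∞} (h : ∀ m d : ℝ, 0 < m → (∀ s, 0 ≤ s → m * s ≤ α s + d) →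
      ENNReal.ofReal m * x ≤ H + ENNReal.ofReal d) :
    extRealFun α x ≤ H := by
  refine iSup₂_le fun t ⟨ht, htx⟩ ↦ ?_
  rcases le_or_gt (α t) 0 with hαt | hαt
  · simp [ENNReal.ofReal_of_nonpos hαt]
  have ht_pos : 0 < t := ht.lt_of_ne (by rintro rfl; linarith)
  obtain ⟨m, hm⟩ := exists_affine_minorant hα (t := t) (by simpa using ht_pos)
  have hm_zero := hm 0 Set.self_mem_Ici
  have hm_pos : 0 < m := pos_of_mul_pos_left (by linarith : 0 < m * t) ht
  rw [← ENNReal.add_le_add_iff_right (ofReal_ne_top (r := m * t - α t))]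
  calc ENNReal.ofReal (α t) + ENNReal.ofReal (m * t - α t)
      = ENNReal.ofReal m * ENNReal.ofReal t := by
        rw [← ENNReal.ofReal_add hαt.le (by linarith), ← ENNReal.ofReal_mul hm_pos.le]
        ring_nf
    _ ≤ ENNReal.ofReal m * x := by gcongr
    _ ≤ H + ENNReal.ofReal (m * t - α t) :=
        h m _ hm_pos fun s hs ↦ by linarith [hm s hs]

lemma convexOn_const_mul_comp_div (hα : ConvexOn ℝ (Set.Ici 0) α) {r : ℝ} (hr : 0 ≤ r) :
    ConvexOn ℝ (Set.Ici 0) fun t ↦ r * α (t / r) := by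
  have hdiv := hα.comp_linearMap (LinearMap.mulRight ℝ r⁻¹)
  refine (hdiv.subset (fun t ht ↦ ?_) (convex_Ici 0)).smul hr
  exact mul_nonneg (Set.mem_Ici.1 ht) (inv_nonneg.2 hr)

lemma TransportEntropyIneq.of_extRealFun_le {X : Type*} [MeasurableSpace X] {c : X × X → ℝ≥0∞}
    {μ : Measure X} (hT : ∀ (ν : Measure X) [IsProbabilityMeasure ν],
      extRealFun α (transportCost c ν μ) ≤ klDiv ν μ)
    {m d : ℝ} (hm : 0 < m) (h : ∀ s, 0 ≤ s → m * s ≤ α s + d) :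
    TransportEntropyIneq (fun p ↦ ENNReal.ofReal m * c p) (ENNReal.ofReal d) μ := fun ν _ ↦ by
  rw [transportCost_const_mul (ENNReal.ofReal_pos.2 hm).ne' ofReal_ne_top]
  exact (ofReal_mul_le_extRealFun_add hm.le h _).trans (by gcongr; exact hT ν)

end AffineMinorants

theorem transport_entropy_tensorization_n_general {n : ℕ} (hn : 1 ≤ n) {X : Fin n → Type*}
    [∀ i, TopologicalSpace (X i)] [∀ i, PolishSpace (X i)] [∀ i, MeasurableSpace (X i)]
    [∀ i, BorelSpace (X i)] {c : ∀ i, X i × X i → ℝ≥0∞} (hc : ∀ i, LowerSemicontinuous (c i))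
    {α : ℝ → ℝ} (hα : ConvexOn ℝ (Set.Ici 0) α) (hα_zero : α 0 ≤ 0)
    {μ : ∀ i, Measure (X i)} [∀ i, IsProbabilityMeasure (μ i)]
    (hT : ∀ i (ν : Measure (X i)) [IsProbabilityMeasure ν],
      extRealFun α (transportCost (c i) ν (μ i)) ≤ klDiv ν (μ i))
    (ν : Measure (∀ i, X i)) [IsProbabilityMeasure ν] :
    extRealFun (fun t ↦ n * α (t / n))
        (transportCost (piCost c) ν (Measure.pi μ)) ≤
      klDiv ν (Measure.pi μ) := by
  have hn_pos : (0 : ℝ) < n := by exact_mod_cast hn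
  refine extRealFun_le_of_forall_affine_le (convexOn_const_mul_comp_div hα hn_pos.le)
    (by simpa using mul_nonpos_of_nonneg_of_nonpos hn_pos.le hα_zero) fun m d hm hmd ↦ ?_
  have hmd_div (s : ℝ) (hs : 0 ≤ s) : m * s ≤ α s + d / n := by
    have := hmd (n * s) (by positivity)
    rw [mul_div_cancel_left₀ s hn_pos.ne'] at this
    rw [← mul_le_mul_iff_right₀ hn_pos, mul_add, mul_div_cancel₀ d hn_pos.ne']
    linarith
  have hpi := TransportEntropyIneq.pi
    (fun i ↦ TransportEntropyIneq.of_extRealFun_le (hT i) hm hmd_div)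
    (fun i ↦ (ENNReal.continuous_const_mul ofReal_ne_top).comp_lowerSemicontinuous (hc i)
      fun _ _ h ↦ mul_le_mul_right h _) ν
  have hconst : ∑ _ : Fin n, ENNReal.ofReal (d / n) = ENNReal.ofReal d := by
    rw [Finset.sum_const, Finset.card_fin, ← ENNReal.ofReal_nsmul, nsmul_eq_mul,
      mul_div_cancel₀ d hn_pos.ne']
  have hcost : piCost (fun i p ↦ ENNReal.ofReal m * c i p) =
      fun p ↦ ENNReal.ofReal m * piCost c p := funext fun _ ↦ (Finset.mul_sum ..).symm
  rwa [hconst, hcost, transportCost_const_mul (ENNReal.ofReal_pos.2 hm).ne' ofReal_ne_top] at hpi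

section Real

variable {X : Type*} [MeasurableSpace X]

lemma optCost_eq_transportCost (c : X → X → ℝ) (ν μ : Measure X) :
    optCost c ν μ = transportCost (fun p ↦ ENNReal.ofReal (c p.1 p.2)) ν μ :=
  iInf_congr fun _ ↦ iInf_congr_Prop ⟨fun h ↦ ⟨h.1, h.2⟩, fun h ↦ ⟨h.fst_eq, h.snd_eq⟩⟩
    fun _ ↦ rfl

lemma relEntropy_eq_klDiv (ν μ : Measure X) [IsProbabilityMeasure ν] [IsProbabilityMeasure μ] :
    relEntropy ν μ = klDiv ν μ := by
  rw [klDiv_eq_lintegral_klFun, relEntropy]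
  simp only [klFun_apply, add_sub_right_comm]

end Real

/-- `n`-fold tensorization: if `μ` satisfies `α(𝒯_c) ≤ H` with `α` convex increasing
and `α(0) = 0`, then the product measure `μⁿ` satisfies
`n·α(𝒯_{c^{⊕n}}(ν, μⁿ)/n) ≤ H(ν|μⁿ)` for all probability measures `ν` on `𝒳ⁿ`. -/
theorem transport_entropy_tensorization_n
    {X : Type*} [TopologicalSpace X] [PolishSpace X] [MeasurableSpace X] [BorelSpace X]
    (c : X → X → ℝ) (hc_nonneg : ∀ x y, 0 ≤ c x y)
    (hc_lsc : LowerSemicontinuous fun p : X × X => c p.1 p.2)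
    (α : ℝ → ℝ)
    (hα_cvx : ConvexOn ℝ (Set.Ici 0) α) (hα_mono : MonotoneOn α (Set.Ici 0))
    (hα_zero : α 0 = 0)
    (μ : Measure X) [IsProbabilityMeasure μ]
    (hT : ∀ ν : Measure X, IsProbabilityMeasure ν →
      extRealFun α (optCost c ν μ) ≤ relEntropy ν μ)
    (n : ℕ) (hn : 1 ≤ n)
    (ν : Measure (Fin n → X)) [IsProbabilityMeasure ν] :
    extRealFun (fun t => (n : ℝ) * α (t / n))
        (optCost (fun x y => ∑ i, c (x i) (y i)) ν (Measure.pi fun _ : Fin n => μ)) ≤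
      relEntropy ν (Measure.pi fun _ : Fin n => μ) := by
  have hcost : (fun p : (Fin n → X) × (Fin n → X) ↦ ENNReal.ofReal (∑ i, c (p.1 i) (p.2 i))) =
      piCost fun _ p ↦ ENNReal.ofReal (c p.1 p.2) :=
    funext fun p ↦ ENNReal.ofReal_sum_of_nonneg fun i _ ↦ hc_nonneg _ _
  rw [relEntropy_eq_klDiv, optCost_eq_transportCost, hcost]
  refine transport_entropy_tensorization_n_general hn (fun _ ↦ ?_) hα_cvx hα_zero.le
    (fun _ ν _ ↦ ?_) ν
  · exact ENNReal.continuous_ofReal.comp_lowerSemicontinuous hc_lsc ENNReal.ofReal_mono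
  · rw [← optCost_eq_transportCost, ← relEntropy_eq_klDiv]
    exact hT ν ‹_›
end

section
/- (Subadditivity of transport costs under disintegration) Let 𝒳₁, 𝒳₂ be Polish spaces with lower semicontinuous cost functions c₁ on 𝒳₁×𝒳₁ and c₂ on 𝒳₂×𝒳₂. Let ν ∈ P(𝒳₁×𝒳₂) with disintegration dν(x₁,x₂) = dν₁(x₁) dν₂^{x₁}(x₂) with respect to the first coordinate (ν₁ being the first marginal of ν and (ν₂^{x₁})_{x₁} a regular conditional distribution of the second coordinate given the first), and let μ₁ ∈ P(𝒳₁), μ₂ ∈ P(𝒳₂). Then 𝒯_{c₁⊕c₂}(ν, μ₁⊗μ₂) ≤ 𝒯_{c₁}(ν₁, μ₁) + ∫_{𝒳₁} 𝒯_{c₂}(ν₂^{x₁}, μ₂) dν₁(x₁). -/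
open MeasureTheory ENNReal

/-! The transport cost is jointly convex: `𝒯_c(∫ κ_θ dm, ∫ η_θ dm) ≤ ∫ 𝒯_c(κ_θ, η_θ) dm`. Given a
coupling `π` of `ν₁` and `μ₁`, the measures `ν` and `μ₁ ⊗ μ₂` are the mixtures under `π` of
`δ_x ⊗ ν₂^x` and `δ_y ⊗ μ₂`, whose transport cost for `c₁ ⊕ c₂` is at most
`c₁(x, y) + 𝒯_{c₂}(ν₂^x, μ₂)`; it remains to integrate and to take the infimum over `π`.

Joint convexity needs no measurable selection of optimal couplings. It is clear for countably many
parameters. In general, discretise `θ ↦ (κ_θ, η_θ)`, choosing in each cell a representative at which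
the cost is nearly minimal, so that the costs increase by at most `ε`; then pass to the limit by
lower semicontinuity of `𝒯_c`. The latter holds because the map sending a measure to its pair of
marginals is proper, by Prokhorov's theorem. -/

open Filter Set Topology TopologicalSpace ProbabilityTheory
open scoped NNReal

section WeakConvergence

theorem lowerSemicontinuous_lintegral_ofReal {Ω : Type*} [TopologicalSpace Ω]
    [PseudoMetrizableSpace Ω] [SecondCountableTopology Ω] [MeasurableSpace Ω]
    [OpensMeasurableSpace Ω] {f : Ω → ℝ} (hf : LowerSemicontinuous f) :
    LowerSemicontinuous fun π : ProbabilityMeasure Ω ↦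
      ∫⁻ ω, ENNReal.ofReal (f ω) ∂(π : Measure Ω) := by
  have layerCake (π : ProbabilityMeasure Ω) :
      ∫⁻ ω, ENNReal.ofReal (f ω) ∂(π : Measure Ω) =
        ∫⁻ t in Ioi 0, (π : Measure Ω) {ω | t < f ω} := by
    have h_max (ω : Ω) : ENNReal.ofReal (f ω) = ENNReal.ofReal (max (f ω) 0) := by
      simp [ENNReal.ofReal_max]
    simp_rw [h_max]
    rw [lintegral_eq_lintegral_meas_lt _ (f := fun ω ↦ max (f ω) 0)
      (ae_of_all _ fun ω ↦ le_max_right _ _) (hf.measurable.max measurable_const).aemeasurable]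
    exact setLIntegral_congr_fun measurableSet_Ioi fun t ht ↦ by
      simp [not_lt_of_gt (mem_Ioi.mp ht)]
  simp_rw [lowerSemicontinuous_iff_le_liminf, layerCake]
  intro π
  calc ∫⁻ t in Ioi 0, (π : Measure Ω) {ω | t < f ω}
    _ ≤ ∫⁻ t in Ioi 0, liminf
          (fun ρ : ProbabilityMeasure Ω ↦ (ρ : Measure Ω) {ω | t < f ω}) (𝓝 π) :=
        lintegral_mono fun t ↦
          ProbabilityMeasure.le_liminf_measure_open_of_tendsto tendsto_id (hf.isOpen_preimage t)
    _ ≤ _ := lintegral_liminf_le fun ρ ↦ Antitone.measurable fun s t hst ↦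
        measure_mono fun ω hω ↦ hst.trans_lt hω

variable {X Y : Type*} [MeasurableSpace X] [MeasurableSpace Y]

/-- The pair of marginals of a probability measure on a product: the couplings of `ν` and `μ`
are the fibre of this map over `(ν, μ)`. -/
noncomputable def marginals (π : ProbabilityMeasure (X × Y)) :
    ProbabilityMeasure X × ProbabilityMeasure Y :=
  (π.map measurable_fst.aemeasurable, π.map measurable_snd.aemeasurable)

theorem marginals_eq_iff {π : ProbabilityMeasure (X × Y)} {ν : ProbabilityMeasure X}
    {μ : ProbabilityMeasure Y} :
    marginals π = (ν, μ) ↔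
      (π : Measure (X × Y)).map Prod.fst = ν ∧ (π : Measure (X × Y)).map Prod.snd = μ :=
  Prod.ext_iff.trans (and_congr Subtype.ext_iff Subtype.ext_iff)

variable [TopologicalSpace X] [TopologicalSpace Y]

theorem isTightMeasureSet_of_isCompact [PolishSpace X] [BorelSpace X]
    {K : Set (ProbabilityMeasure X)} (hK : IsCompact K) :
    IsTightMeasureSet (ProbabilityMeasure.toMeasure '' K) := by
  let := upgradeIsCompletelyMetrizable X
  exact isTightMeasureSet_of_isCompact_closure (by rwa [hK.isClosed.closure_eq])

theorem isProperMap_marginals [PolishSpace X] [BorelSpace X] [PolishSpace Y] [BorelSpace Y] :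
    IsProperMap (marginals : ProbabilityMeasure (X × Y) → _) := by
  have hcont : Continuous (marginals : ProbabilityMeasure (X × Y) → _) :=
    (ProbabilityMeasure.continuous_map continuous_fst).prodMk
      (ProbabilityMeasure.continuous_map continuous_snd)
  refine isProperMap_iff_isCompact_preimage.mpr ⟨hcont, fun K hK ↦ ?_⟩
  have htight : IsTightMeasureSet
      (ProbabilityMeasure.toMeasure '' (marginals ⁻¹' K : Set (ProbabilityMeasure (X × Y)))) := by
    refine IsTightMeasureSet.prodMk
      ((isTightMeasureSet_of_isCompact (hK.image continuous_fst)).subset ?_)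
      ((isTightMeasureSet_of_isCompact (hK.image continuous_snd)).subset ?_)
    · rintro _ ⟨_, ⟨π, hπ, rfl⟩, rfl⟩
      exact ⟨(marginals π).1, mem_image_of_mem _ hπ, rfl⟩
    · rintro _ ⟨_, ⟨π, hπ, rfl⟩, rfl⟩
      exact ⟨(marginals π).2, mem_image_of_mem _ hπ, rfl⟩
  simpa only [(hK.isClosed.preimage hcont).closure_eq] using
    isCompact_closure_of_isTightMeasureSet htight

end WeakConvergence

section OptCost

variable {X : Type*} [MeasurableSpace X] {c : X → X → ℝ}

theorem optCost_le_lintegral {ν μ : Measure X} {π : Measure (X × X)}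
    (hfst : π.map Prod.fst = ν) (hsnd : π.map Prod.snd = μ) :
    optCost c ν μ ≤ ∫⁻ p, ENNReal.ofReal (c p.1 p.2) ∂π :=
  iInf₂_le π ⟨hfst, hsnd⟩

theorem optCost_dirac_le (hc : Measurable fun p : X × X ↦ c p.1 p.2) (x y : X) :
    optCost c (.dirac x) (.dirac y) ≤ ENNReal.ofReal (c x y) := by
  refine (optCost_le_lintegral (π := .dirac (x, y)) (Measure.map_dirac' measurable_fst _)
    (Measure.map_dirac' measurable_snd _)).trans_eq ?_
  rw [lintegral_dirac' _ hc.ennreal_ofReal]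

variable [TopologicalSpace X] [PolishSpace X] [BorelSpace X]

theorem exists_coupling_lintegral_eq_optCost (hc : LowerSemicontinuous fun p : X × X ↦ c p.1 p.2)
    (ν μ : ProbabilityMeasure X) :
    ∃ π : ProbabilityMeasure (X × X), marginals π = (ν, μ) ∧
      ∫⁻ p, ENNReal.ofReal (c p.1 p.2) ∂(π : Measure (X × X)) = optCost c ν μ := by
  have hne : (marginals ⁻¹' {(ν, μ)}).Nonempty :=
    ⟨ν.prod μ, marginals_eq_iff.mpr (by simp)⟩
  obtain ⟨π, hπ, hmin⟩ := LowerSemicontinuousOn.exists_isMinOn hne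
    (isProperMap_marginals.isCompact_preimage isCompact_singleton)
    ((lowerSemicontinuous_lintegral_ofReal hc).lowerSemicontinuousOn _)
  have hπ' := marginals_eq_iff.mp hπ
  refine ⟨π, hπ, le_antisymm (le_iInf₂ fun ρ hρ ↦ ?_) (optCost_le_lintegral hπ'.1 hπ'.2)⟩
  have : IsProbabilityMeasure (ρ.map Prod.fst) := hρ.1 ▸ inferInstance
  have : IsProbabilityMeasure ρ := Measure.isProbabilityMeasure_of_map Prod.fst
  exact hmin (show marginals ⟨ρ, this⟩ = (ν, μ) from marginals_eq_iff.mpr hρ)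

theorem lowerSemicontinuous_optCost (hc : LowerSemicontinuous fun p : X × X ↦ c p.1 p.2) :
    LowerSemicontinuous fun p : ProbabilityMeasure X × ProbabilityMeasure X ↦
      optCost c p.1 p.2 := by
  refine lowerSemicontinuous_iff_isClosed_preimage.mpr fun y ↦ ?_
  convert isProperMap_marginals.isClosedMap _
    ((lowerSemicontinuous_lintegral_ofReal hc).isClosed_preimage y) using 1
  ext ⟨ν, μ⟩
  constructor
  · intro h
    obtain ⟨π, hπ, hcost⟩ := exists_coupling_lintegral_eq_optCost hc ν μ
    exact ⟨π, hcost.trans_le h, hπ⟩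
  · rintro ⟨π, hπ, hmarg⟩
    obtain ⟨hfst, hsnd⟩ := marginals_eq_iff.mp hmarg
    exact (optCost_le_lintegral hfst hsnd).trans hπ

end OptCost

section GirySpace

theorem countable_generatePiSystem {α : Type*} {S : Set (Set α)} (hS : S.Countable) :
    (generatePiSystem S).Countable := by
  refine ((countable_ofPred_finite_subset hS).image sInter).mono fun s hs ↦ ?_
  induction hs with
  | @base s hs => exact ⟨{s}, ⟨finite_singleton s, singleton_subset_iff.mpr hs⟩, sInter_singleton s⟩
  | inter _ _ _ ihs iht =>
    obtain ⟨t, ⟨ht, htS⟩, rfl⟩ := ihs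
    obtain ⟨u, ⟨hu, huS⟩, rfl⟩ := iht
    exact ⟨t ∪ u, ⟨ht.union hu, union_subset htS huS⟩, sInter_union t u⟩

theorem separableSpace_of_le {α : Type*} {s t : TopologicalSpace α} (hst : s ≤ t)
    (hs : @SeparableSpace α s) : @SeparableSpace α t :=
  let ⟨D, hD, hdense⟩ := hs.exists_countable_dense
  ⟨D, hD, fun x ↦ closure.mono hst (hdense x)⟩

variable {X : Type*} [TopologicalSpace X] [SecondCountableTopology X] [MeasurableSpace X]
  [OpensMeasurableSpace X]

/-- The values of a probability measure on the countable π-system generated by a countable basis.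
They determine the topology of `ProbabilityMeasure X` from above (see `induced_basisValues_le`)
and thereby transfer countability properties to it. -/
noncomputable def basisValues (μ : ProbabilityMeasure X) :
    generatePiSystem (countableBasis X) → ℝ≥0 :=
  fun s ↦ μ s

theorem measurableSet_of_mem_generatePiSystem_countableBasis {s : Set X}
    (hs : s ∈ generatePiSystem (countableBasis X)) : MeasurableSet s :=
  generatePiSystem_measurableSet (fun _ ht ↦ (isOpen_of_mem_countableBasis ht).measurableSet) s hs

instance : Countable (generatePiSystem (countableBasis X)) :=
  (countable_generatePiSystem (countable_countableBasis X)).to_subtype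

theorem measurable_basisValues : Measurable (basisValues (X := X)) :=
  measurable_pi_lambda _ fun s ↦ ((Measure.measurable_coe
    (measurableSet_of_mem_generatePiSystem_countableBasis s.2)).comp
      measurable_subtype_coe).ennreal_toNNReal

theorem induced_basisValues_le :
    TopologicalSpace.induced basisValues inferInstance ≤
      (inferInstance : TopologicalSpace (ProbabilityMeasure X)) := by
  rw [le_iff_nhds]
  intro μ
  have hlim : Tendsto basisValues (comap basisValues (𝓝 (basisValues μ))) (𝓝 (basisValues μ)) :=
    tendsto_comap
  rw [nhds_induced, ← tendsto_id']
  have hpi := isPiSystem_generatePiSystem (countableBasis X)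
  refine hpi.tendsto_probabilityMeasure_of_tendsto_of_mem
    (fun s ↦ measurableSet_of_mem_generatePiSystem_countableBasis) (fun u hu x hx ↦ ?_)
    (fun s hs ↦ tendsto_pi_nhds.mp hlim ⟨s, hs⟩)
  obtain ⟨s, hs, hxs, hsu⟩ := (isBasis_countableBasis X).exists_subset_of_mem_open hx hu
  exact ⟨s, subset_generatePiSystem_self _ hs,
    ((isBasis_countableBasis X).isOpen hs).mem_nhds hxs, hsu⟩

instance instOpensMeasurableSpaceProbabilityMeasure :
    OpensMeasurableSpace (ProbabilityMeasure X) where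
  borel_le := MeasurableSpace.generateFrom_le fun u hu ↦ by
    obtain ⟨v, hv, rfl⟩ := induced_basisValues_le u hu
    exact measurable_basisValues hv.measurableSet

instance instSecondCountableTopologyProbabilityMeasure [PseudoMetrizableSpace X] :
    SecondCountableTopology (ProbabilityMeasure X) := by
  have : SeparableSpace (ProbabilityMeasure X) :=
    separableSpace_of_le induced_basisValues_le
      (@SecondCountableTopology.to_separableSpace _ (.induced basisValues inferInstance)
        (secondCountableTopology_induced _ _ basisValues))
  let := pseudoMetrizableSpacePseudoMetric (ProbabilityMeasure X)
  exact UniformSpace.secondCountable_of_separable _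

end GirySpace

section Measurability

variable {Θ X : Type*} [MeasurableSpace Θ] [MeasurableSpace X]

/-- A Markov kernel, viewed as a map into the space of probability measures. -/
noncomputable def kernelLaw (κ : Kernel Θ X) [IsMarkovKernel κ] (θ : Θ) : ProbabilityMeasure X :=
  ⟨κ θ, inferInstance⟩

theorem measurable_kernelLaw (κ : Kernel Θ X) [IsMarkovKernel κ] : Measurable (kernelLaw κ) :=
  κ.measurable.subtype_mk

theorem measurable_optCost [TopologicalSpace X] [PolishSpace X] [BorelSpace X] {c : X → X → ℝ}
    (hc : LowerSemicontinuous fun p : X × X ↦ c p.1 p.2) (κ η : Kernel Θ X)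
    [IsMarkovKernel κ] [IsMarkovKernel η] : Measurable fun θ ↦ optCost c (κ θ) (η θ) :=
  (lowerSemicontinuous_optCost hc).measurable.comp
    ((measurable_kernelLaw κ).prodMk (measurable_kernelLaw η))

end Measurability

section JointConvexity

theorem exists_mem_forall_le_add {α : Type*} {S : Set α} (hS : S.Nonempty) (T : α → ℝ≥0∞)
    {ε : ℝ≥0∞} (hε : ε ≠ 0) : ∃ s ∈ S, ∀ a ∈ S, T s ≤ T a + ε := by
  rcases eq_or_ne (⨅ a ∈ S, T a) ∞ with htop | hfin
  · obtain ⟨s, hs⟩ := hS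
    exact ⟨s, hs, fun a ha ↦ by simp [top_le_iff.mp (htop.ge.trans (iInf₂_le a ha))]⟩
  · obtain ⟨s, hs, hlt⟩ := by
      simpa only [iInf_lt_iff, exists_prop] using ENNReal.lt_add_right hfin hε
    exact ⟨s, hs, fun a ha ↦ hlt.le.trans (by gcongr; exact iInf₂_le a ha)⟩

theorem exists_measurable_nat_dist_lt {Θ Z : Type*} [MeasurableSpace Θ] [Nonempty Θ]
    [PseudoMetricSpace Z] [SeparableSpace Z] [MeasurableSpace Z] [OpensMeasurableSpace Z]
    {f : Θ → Z} (hf : Measurable f) (T : Θ → ℝ≥0∞) {ε : ℝ≥0∞} (hε : ε ≠ 0) {δ : ℝ} (hδ : 0 < δ) :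
    ∃ (i : Θ → ℕ) (s : ℕ → Θ), Measurable i ∧
      ∀ θ, T (s (i θ)) ≤ T θ + ε ∧ dist (f (s (i θ))) (f θ) < δ := by
  classical
  have : Nonempty Z := ⟨f (Classical.arbitrary Θ)⟩
  have hnear (θ : Θ) : ∃ n, dist (f θ) (denseSeq Z n) < δ / 2 :=
    (denseRange_denseSeq Z).exists_dist_lt (f θ) (half_pos hδ)
  let i (θ : Θ) : ℕ := Nat.find (hnear θ)
  have hi : Measurable i :=
    measurable_find hnear fun n ↦ measurableSet_lt (hf.dist measurable_const) measurable_const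
  have hi_near (θ : Θ) : dist (f θ) (denseSeq Z (i θ)) < δ / 2 := Nat.find_spec (hnear θ)
  have hcell (n : ℕ) : ∃ s, ∀ θ, i θ = n → i s = n ∧ T s ≤ T θ + ε := by
    rcases (i ⁻¹' {n}).eq_empty_or_nonempty with hempty | hne
    · exact ⟨Classical.arbitrary Θ, fun θ hθ ↦ (hempty.subset hθ).elim⟩
    · obtain ⟨s, hs, hmin⟩ := exists_mem_forall_le_add hne T hε
      exact ⟨s, fun θ hθ ↦ ⟨hs, hmin θ hθ⟩⟩
  choose s hs using hcell
  refine ⟨i, s, hi, fun θ ↦ ⟨(hs _ θ rfl).2, ?_⟩⟩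
  calc dist (f (s (i θ))) (f θ)
    _ ≤ dist (f (s (i θ))) (denseSeq Z (i θ)) + dist (f θ) (denseSeq Z (i θ)) :=
        dist_triangle_right _ _ _
    _ < δ / 2 + δ / 2 := by
        refine add_lt_add ?_ (hi_near θ)
        simpa only [(hs _ θ rfl).1] using hi_near (s (i θ))
    _ = δ := add_halves δ

theorem exists_measurable_nat_tendsto {Θ Z : Type*} [MeasurableSpace Θ] [Nonempty Θ]
    [TopologicalSpace Z] [PseudoMetrizableSpace Z] [SeparableSpace Z] [MeasurableSpace Z]
    [OpensMeasurableSpace Z] {f : Θ → Z} (hf : Measurable f) (T : Θ → ℝ≥0∞) {ε : ℝ≥0∞}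
    (hε : ε ≠ 0) :
    ∃ (i : ℕ → Θ → ℕ) (s : ℕ → ℕ → Θ), (∀ k, Measurable (i k)) ∧
      (∀ k θ, T (s k (i k θ)) ≤ T θ + ε) ∧
      ∀ θ, Tendsto (fun k ↦ f (s k (i k θ))) atTop (𝓝 (f θ)) := by
  let := pseudoMetrizableSpacePseudoMetric Z
  choose i s hi hs using fun k : ℕ ↦
    exists_measurable_nat_dist_lt hf T hε (Nat.one_div_pos_of_nat (α := ℝ) (n := k))
  exact ⟨i, s, hi, fun k θ ↦ (hs k θ).1, fun θ ↦ tendsto_iff_dist_tendsto_zero.mpr <|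
    squeeze_zero (fun _ ↦ dist_nonneg) (fun k ↦ (hs k θ).2.le)
      tendsto_one_div_add_atTop_nhds_zero_nat⟩

variable {Θ X : Type*} [MeasurableSpace Θ] [MeasurableSpace X]

/-- The mixture `∫ κ θ dm(θ)` of the laws of a Markov kernel, as a point of the space of probability
measures. -/
noncomputable def mixtureLaw (κ : Kernel Θ X) [IsMarkovKernel κ] (m : Measure Θ)
    [IsProbabilityMeasure m] : ProbabilityMeasure X :=
  ⟨κ ∘ₘ m, inferInstance⟩

theorem tendsto_mixtureLaw_of_tendsto_kernelLaw [TopologicalSpace X] [OpensMeasurableSpace X]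
    {κs : ℕ → Kernel Θ X} [∀ k, IsMarkovKernel (κs k)] {κ : Kernel Θ X} [IsMarkovKernel κ]
    (hκ : ∀ θ, Tendsto (fun k ↦ kernelLaw (κs k) θ) atTop (𝓝 (kernelLaw κ θ)))
    (m : Measure Θ) [IsProbabilityMeasure m] :
    Tendsto (fun k ↦ mixtureLaw (κs k) m) atTop (𝓝 (mixtureLaw κ m)) := by
  rw [ProbabilityMeasure.tendsto_iff_forall_lintegral_tendsto]
  intro f
  have hf : Measurable fun x ↦ (f x : ℝ≥0∞) := f.continuous.measurable.coe_nnreal_ennreal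
  have hbind (η : Kernel Θ X) : ∫⁻ x, f x ∂(η ∘ₘ m) = ∫⁻ θ, ∫⁻ x, f x ∂η θ ∂m :=
    Measure.lintegral_bind η.aemeasurable hf.aemeasurable
  simp only [mixtureLaw, ProbabilityMeasure.coe_mk, hbind]
  refine tendsto_lintegral_of_dominated_convergence (fun _ ↦ edist 0 f)
    (fun k ↦ hf.lintegral_kernel) (fun k ↦ ae_of_all _ fun θ ↦ ?_) (by simp [edist_ne_top])
    (ae_of_all _ fun θ ↦
      ProbabilityMeasure.tendsto_iff_forall_lintegral_tendsto.mp (hκ θ) f)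
  simpa using f.lintegral_le_edist_mul (μ := κs k θ)

theorem optCost_comp_le_of_map_eq {c : X → X → ℝ}
    (hc : Measurable fun p : X × X ↦ c p.1 p.2) {κ η : Kernel Θ X} (ρ : Kernel Θ (X × X))
    (hfst : ρ.map Prod.fst = κ) (hsnd : ρ.map Prod.snd = η) (m : Measure Θ) :
    optCost c (κ ∘ₘ m) (η ∘ₘ m) ≤ ∫⁻ θ, ∫⁻ p, ENNReal.ofReal (c p.1 p.2) ∂ρ θ ∂m := by
  rw [← Measure.lintegral_bind ρ.aemeasurable hc.ennreal_ofReal.aemeasurable]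
  exact optCost_le_lintegral (by rw [Measure.map_comp m ρ measurable_fst, hfst])
    (by rw [Measure.map_comp m ρ measurable_snd, hsnd])

variable [TopologicalSpace X] [PolishSpace X] [BorelSpace X] {c : X → X → ℝ}

theorem optCost_comap_comp_le_lintegral {ι : Type*} [MeasurableSpace ι] [Countable ι]
    [MeasurableSingletonClass ι] (hc : LowerSemicontinuous fun p : X × X ↦ c p.1 p.2)
    (κ η : Kernel ι X) [IsMarkovKernel κ] [IsMarkovKernel η] {i : Θ → ι} (hi : Measurable i)
    (m : Measure Θ) :
    optCost c (κ.comap i hi ∘ₘ m) (η.comap i hi ∘ₘ m) ≤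
      ∫⁻ θ, optCost c (κ (i θ)) (η (i θ)) ∂m := by
  choose ρ hρ hcost using fun j ↦
    exists_coupling_lintegral_eq_optCost hc (kernelLaw κ j) (kernelLaw η j)
  let ρ' : Kernel ι (X × X) := Kernel.ofFunOfCountable fun j ↦ ρ j
  refine (optCost_comp_le_of_map_eq hc.measurable (ρ'.comap i hi) ?_ ?_ m).trans_eq
    (lintegral_congr fun θ ↦ hcost (i θ))
  · ext1 θ
    rw [Kernel.map_apply _ measurable_fst]
    exact (marginals_eq_iff.mp (hρ (i θ))).1
  · ext1 θ
    rw [Kernel.map_apply _ measurable_snd]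
    exact (marginals_eq_iff.mp (hρ (i θ))).2

theorem optCost_comp_le_lintegral (hc : LowerSemicontinuous fun p : X × X ↦ c p.1 p.2)
    (κ η : Kernel Θ X) [IsMarkovKernel κ] [IsMarkovKernel η] (m : Measure Θ)
    [IsProbabilityMeasure m] :
    optCost c (κ ∘ₘ m) (η ∘ₘ m) ≤ ∫⁻ θ, optCost c (κ θ) (η θ) ∂m := by
  have : Nonempty Θ := nonempty_of_isProbabilityMeasure m
  refine ENNReal.le_of_forall_pos_le_add fun ε hε _ ↦ ?_
  obtain ⟨i, s, hi, hcost, hlim⟩ := exists_measurable_nat_tendsto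
    ((measurable_kernelLaw κ).prodMk (measurable_kernelLaw η))
    (fun θ ↦ optCost c (κ θ) (η θ)) (ENNReal.coe_ne_zero.mpr hε.ne')
  let κs (k : ℕ) := κ.comap (s k) (measurable_of_countable _)
  let ηs (k : ℕ) := η.comap (s k) (measurable_of_countable _)
  have hκ := tendsto_mixtureLaw_of_tendsto_kernelLaw (κs := fun k ↦ (κs k).comap (i k) (hi k))
    (κ := κ) (fun θ ↦ (hlim θ).fst_nhds) m
  have hη := tendsto_mixtureLaw_of_tendsto_kernelLaw (κs := fun k ↦ (ηs k).comap (i k) (hi k))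
    (κ := η) (fun θ ↦ (hlim θ).snd_nhds) m
  refine ((lowerSemicontinuous_optCost hc).isClosed_preimage _).mem_of_tendsto
    (hκ.prodMk_nhds hη) (Eventually.of_forall fun k ↦ ?_)
  calc optCost c ((κs k).comap (i k) (hi k) ∘ₘ m) ((ηs k).comap (i k) (hi k) ∘ₘ m)
    _ ≤ ∫⁻ θ, optCost c (κ (s k (i k θ))) (η (s k (i k θ))) ∂m :=
        optCost_comap_comp_le_lintegral hc (κs k) (ηs k) (hi k) m
    _ ≤ ∫⁻ θ, (optCost c (κ θ) (η θ) + ε) ∂m := lintegral_mono fun θ ↦ hcost k θ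
    _ = ∫⁻ θ, optCost c (κ θ) (η θ) ∂m + ε := by
        rw [lintegral_add_right _ measurable_const, lintegral_const, measure_univ, mul_one]

end JointConvexity

section Tensor

/-- The tensorized cost `c₁ ⊕ c₂` on a product. Reducible, so that it is interchangeable with the
explicit sum of costs. -/
abbrev tensorCost {X₁ X₂ : Type*} (c₁ : X₁ → X₁ → ℝ) (c₂ : X₂ → X₂ → ℝ) (p q : X₁ × X₂) : ℝ :=
  c₁ p.1 q.1 + c₂ p.2 q.2

theorem lowerSemicontinuous_tensorCost {X₁ X₂ : Type*} [TopologicalSpace X₁] [TopologicalSpace X₂]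
    {c₁ : X₁ → X₁ → ℝ} {c₂ : X₂ → X₂ → ℝ}
    (hc₁ : LowerSemicontinuous fun p : X₁ × X₁ ↦ c₁ p.1 p.2)
    (hc₂ : LowerSemicontinuous fun p : X₂ × X₂ ↦ c₂ p.1 p.2) :
    LowerSemicontinuous fun p : (X₁ × X₂) × (X₁ × X₂) ↦ tensorCost c₁ c₂ p.1 p.2 :=
  (hc₁.comp (by fun_prop : Continuous fun p : (X₁ × X₂) × (X₁ × X₂) ↦ (p.1.1, p.2.1))).add
    (hc₂.comp (by fun_prop : Continuous fun p : (X₁ × X₂) × (X₁ × X₂) ↦ (p.1.2, p.2.2)))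

variable {X₁ X₂ : Type*} [MeasurableSpace X₁] [MeasurableSpace X₂] {c₁ : X₁ → X₁ → ℝ}
  {c₂ : X₂ → X₂ → ℝ}

theorem optCost_prod_map_le_lintegral_add
    (hc₁ : Measurable fun p : X₁ × X₁ ↦ c₁ p.1 p.2)
    (hc₂ : Measurable fun p : X₂ × X₂ ↦ c₂ p.1 p.2)
    (π₁ : Measure (X₁ × X₁)) (π₂ : Measure (X₂ × X₂)) [IsProbabilityMeasure π₁]
    [IsProbabilityMeasure π₂] :
    optCost (tensorCost c₁ c₂) ((π₁.map Prod.fst).prod (π₂.map Prod.fst))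
        ((π₁.map Prod.snd).prod (π₂.map Prod.snd)) ≤
      ∫⁻ p, ENNReal.ofReal (c₁ p.1 p.2) ∂π₁ + ∫⁻ p, ENNReal.ofReal (c₂ p.1 p.2) ∂π₂ := by
  let e : (X₁ × X₁) × (X₂ × X₂) → (X₁ × X₂) × (X₁ × X₂) := fun q ↦
    ((q.1.1, q.2.1), (q.1.2, q.2.2))
  have he : Measurable e := by fun_prop
  have hfst : ((π₁.prod π₂).map e).map Prod.fst =
      (π₁.map Prod.fst).prod (π₂.map Prod.fst) := by
    rw [Measure.map_map measurable_fst he, Measure.map_prod_map _ _ measurable_fst measurable_fst,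
      show Prod.fst ∘ e = Prod.map Prod.fst Prod.fst from rfl]
  have hsnd : ((π₁.prod π₂).map e).map Prod.snd =
      (π₁.map Prod.snd).prod (π₂.map Prod.snd) := by
    rw [Measure.map_map measurable_snd he, Measure.map_prod_map _ _ measurable_snd measurable_snd,
      show Prod.snd ∘ e = Prod.map Prod.snd Prod.snd from rfl]
  calc optCost (tensorCost c₁ c₂) ((π₁.map Prod.fst).prod (π₂.map Prod.fst))
        ((π₁.map Prod.snd).prod (π₂.map Prod.snd))
    _ ≤ ∫⁻ q, ENNReal.ofReal (c₁ q.1.1 q.2.1 + c₂ q.1.2 q.2.2) ∂(π₁.prod π₂).map e :=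
        optCost_le_lintegral hfst hsnd
    _ ≤ ∫⁻ q, ENNReal.ofReal (c₁ q.1.1 q.1.2 + c₂ q.2.1 q.2.2) ∂π₁.prod π₂ :=
        lintegral_map_le _ _
    _ ≤ ∫⁻ q, (ENNReal.ofReal (c₁ q.1.1 q.1.2) + ENNReal.ofReal (c₂ q.2.1 q.2.2)) ∂π₁.prod π₂ :=
        lintegral_mono fun q ↦ ENNReal.ofReal_add_le
    _ = ∫⁻ q, ENNReal.ofReal (c₁ q.1.1 q.1.2) ∂π₁.prod π₂ +
          ∫⁻ q, ENNReal.ofReal (c₂ q.2.1 q.2.2) ∂π₁.prod π₂ :=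
        lintegral_add_left (hc₁.comp measurable_fst).ennreal_ofReal _
    _ = ∫⁻ p, ENNReal.ofReal (c₁ p.1 p.2) ∂π₁ + ∫⁻ p, ENNReal.ofReal (c₂ p.1 p.2) ∂π₂ :=
        congrArg₂ _ (measurePreserving_fst.lintegral_comp hc₁.ennreal_ofReal)
          (measurePreserving_snd.lintegral_comp hc₂.ennreal_ofReal)

theorem optCost_prod_le_add
    (hc₁ : Measurable fun p : X₁ × X₁ ↦ c₁ p.1 p.2)
    (hc₂ : Measurable fun p : X₂ × X₂ ↦ c₂ p.1 p.2)
    (ν₁ μ₁ : Measure X₁) (ν₂ μ₂ : Measure X₂) [IsProbabilityMeasure ν₁]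
    [IsProbabilityMeasure ν₂] :
    optCost (tensorCost c₁ c₂) (ν₁.prod ν₂) (μ₁.prod μ₂) ≤
      optCost c₁ ν₁ μ₁ + optCost c₂ ν₂ μ₂ := by
  rw [optCost.eq_def c₁, optCost.eq_def c₂]
  simp only [ENNReal.iInf_add, ENNReal.add_iInf, le_iInf_iff]
  rintro π₂ ⟨rfl, rfl⟩ π₁ ⟨rfl, rfl⟩
  have : IsProbabilityMeasure π₁ := Measure.isProbabilityMeasure_of_map Prod.fst
  have : IsProbabilityMeasure π₂ := Measure.isProbabilityMeasure_of_map Prod.fst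
  exact optCost_prod_map_le_lintegral_add hc₁ hc₂ π₁ π₂

theorem compProd_map_eq_comp_comap {Θ : Type*} [MeasurableSpace Θ] (m : Measure Θ) [SFinite m]
    {f : Θ → X₁} (hf : Measurable f) (κ : Kernel X₁ X₂) [IsSFiniteKernel κ] :
    m.map f ⊗ₘ κ = (Kernel.id ×ₖ κ).comap f hf ∘ₘ m := by
  rw [Measure.compProd_eq_comp_prod, ← Measure.deterministic_comp_eq_map hf, Measure.comp_assoc,
    Kernel.comp_deterministic_eq_comap]

theorem optCost_compProd_le_lintegral [TopologicalSpace X₁] [PolishSpace X₁] [BorelSpace X₁]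
    [TopologicalSpace X₂] [PolishSpace X₂] [BorelSpace X₂]
    (hc₁ : LowerSemicontinuous fun p : X₁ × X₁ ↦ c₁ p.1 p.2)
    (hc₂ : LowerSemicontinuous fun p : X₂ × X₂ ↦ c₂ p.1 p.2)
    (κ η : Kernel X₁ X₂) [IsMarkovKernel κ] [IsMarkovKernel η]
    (π : Measure (X₁ × X₁)) [IsProbabilityMeasure π] :
    optCost (tensorCost c₁ c₂) (π.map Prod.fst ⊗ₘ κ) (π.map Prod.snd ⊗ₘ η) ≤
      ∫⁻ p, (ENNReal.ofReal (c₁ p.1 p.2) + optCost c₂ (κ p.1) (η p.2)) ∂π := by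
  rw [compProd_map_eq_comp_comap π measurable_fst, compProd_map_eq_comp_comap π measurable_snd]
  refine (optCost_comp_le_lintegral (lowerSemicontinuous_tensorCost hc₁ hc₂) _ _ π).trans
    (lintegral_mono fun p ↦ ?_)
  simp only [Kernel.comap_apply, Kernel.prod_apply, Kernel.id_apply]
  grw [optCost_prod_le_add hc₁.measurable hc₂.measurable, optCost_dirac_le hc₁.measurable]

end Tensor

open ProbabilityTheory in
/-- Subadditivity of transport costs under disintegration: if `ν` on `X₁ × X₂`
disintegrates as `dν(x₁,x₂) = dν₁(x₁) dν₂^{x₁}(x₂)`, where `ν₁ = ν.fst` is the first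
marginal and `κ x₁ = ν₂^{x₁}` a regular conditional distribution of the second
coordinate given the first, then
`𝒯_{c₁⊕c₂}(ν, μ₁⊗μ₂) ≤ 𝒯_{c₁}(ν₁, μ₁) + ∫ 𝒯_{c₂}(ν₂^{x₁}, μ₂) dν₁(x₁)`. -/
theorem optCost_tensor_le_of_disintegration
    {X₁ : Type*} [TopologicalSpace X₁] [PolishSpace X₁] [MeasurableSpace X₁] [BorelSpace X₁]
    {X₂ : Type*} [TopologicalSpace X₂] [PolishSpace X₂] [MeasurableSpace X₂] [BorelSpace X₂]
    (c₁ : X₁ → X₁ → ℝ) (c₂ : X₂ → X₂ → ℝ)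
    (hc₁_nonneg : ∀ x y, 0 ≤ c₁ x y) (hc₂_nonneg : ∀ x y, 0 ≤ c₂ x y)
    (hc₁_lsc : LowerSemicontinuous fun p : X₁ × X₁ => c₁ p.1 p.2)
    (hc₂_lsc : LowerSemicontinuous fun p : X₂ × X₂ => c₂ p.1 p.2)
    (ν : Measure (X₁ × X₂)) [IsProbabilityMeasure ν]
    (κ : Kernel X₁ X₂) [IsMarkovKernel κ] (hκ : ν = ν.fst.compProd κ)
    (μ₁ : Measure X₁) [IsProbabilityMeasure μ₁] (μ₂ : Measure X₂) [IsProbabilityMeasure μ₂] :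
    optCost (fun p q => c₁ p.1 q.1 + c₂ p.2 q.2) ν (μ₁.prod μ₂) ≤
      optCost c₁ ν.fst μ₁ + ∫⁻ x₁, optCost c₂ (κ x₁) μ₂ ∂ν.fst := by
  rw [optCost.eq_def c₁]
  simp only [ENNReal.iInf_add, le_iInf_iff]
  rintro π ⟨hfst, rfl⟩
  have : IsProbabilityMeasure (π.map Prod.fst) := hfst ▸ inferInstance
  have : IsProbabilityMeasure π := Measure.isProbabilityMeasure_of_map Prod.fst
  have hT : Measurable fun x ↦ optCost c₂ (κ x) μ₂ :=
    measurable_optCost hc₂_lsc κ (Kernel.const X₁ μ₂)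
  calc optCost (tensorCost c₁ c₂) ν ((π.map Prod.snd).prod μ₂)
    _ = optCost (tensorCost c₁ c₂) (π.map Prod.fst ⊗ₘ κ)
          (π.map Prod.snd ⊗ₘ Kernel.const X₁ μ₂) := by
        rw [hfst, ← hκ, Measure.compProd_const]
    _ ≤ ∫⁻ p, (ENNReal.ofReal (c₁ p.1 p.2) + optCost c₂ (κ p.1) μ₂) ∂π :=
        optCost_compProd_le_lintegral hc₁_lsc hc₂_lsc κ (Kernel.const X₁ μ₂) π
    _ = ∫⁻ p, ENNReal.ofReal (c₁ p.1 p.2) ∂π + ∫⁻ x₁, optCost c₂ (κ x₁) μ₂ ∂ν.fst := by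
        rw [lintegral_add_left hc₁_lsc.measurable.ennreal_ofReal, ← hfst,
          lintegral_map hT measurable_fst]
end
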